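/- arXiv:1912.11614 — 2 statements merged into one kernel-verified Lean document; each statement's English description precedes it below -/
import Mathlib

section
/- Let n, m be integers with n > m ≥ 2 and n − m odd. Then ∫_0^∞ sin^n(x)/x^m dx = (−1)^{(m−n+1)/2}/(2^n (m−1)!) · ∑'_{l=0}^{n} (−1)^l · binom(n,l) · (n−2l)^{m−1} · ln|2l−n|, where ∑' means the term with 2l = n is omitted (equivalently, terms with 2l = n contribute 0 via the convention 0·ln 0 = 0), and the integral is a Lebesgue integral over (0,∞). -/
open MeasureTheory Real Finset

lemma aux_gamma_int (k : ℕ) {x : ℝ} (hx : 0 < x) :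
    ∫ t in Set.Ioi (0 : ℝ), t ^ k * Real.exp (-(x * t)) = k.factorial / x ^ (k + 1) := by
  have h := Real.integral_rpow_mul_exp_neg_mul_Ioi (a := (k : ℝ) + 1) (r := x) (by positivity) hx
  rw [Real.Gamma_nat_eq_factorial] at h
  simp only [add_sub_cancel_right, Real.rpow_natCast] at h
  rw [h, show ((k : ℝ) + 1) = ((k + 1 : ℕ) : ℝ) by push_cast; rfl, Real.rpow_natCast]
  rw [div_pow, one_pow]; ring

lemma aux_gamma_integrable (k : ℕ) {x : ℝ} (hx : 0 < x) :
    IntegrableOn (fun t : ℝ => t ^ k * Real.exp (-(x * t))) (Set.Ioi 0) := by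
  refine .of_integral_ne_zero ?_
  rw [aux_gamma_int k hx]
  positivity

lemma aux_integrable (n m : ℕ) (hm : 2 ≤ m) (hmn : m < n) :
    IntegrableOn (fun x : ℝ => Real.sin x ^ n / x ^ m) (Set.Ioi 0) := by
  have hmeas : Measurable (fun x : ℝ => Real.sin x ^ n / x ^ m) := by fun_prop
  rw [← Set.Ioc_union_Ioi_eq_Ioi (zero_le_one (α := ℝ)), integrableOn_union]
  constructor
  · refine Integrable.mono' (g := fun _ => (1 : ℝ)) ?_ hmeas.aestronglyMeasurable ?_
    · exact integrableOn_const (by simp)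
    · refine (ae_restrict_iff' measurableSet_Ioc).mpr (ae_of_all _ fun x hx => ?_)
      rw [norm_div, norm_pow, norm_pow, Real.norm_eq_abs, Real.norm_eq_abs, abs_of_pos hx.1]
      rw [div_le_one (pow_pos hx.1 _)]
      have h1 : |Real.sin x| ≤ x := by
        have := Real.abs_sin_le_abs (x := x)
        rwa [abs_of_pos hx.1] at this
      calc |Real.sin x| ^ n ≤ x ^ n := pow_le_pow_left₀ (abs_nonneg _) h1 _
        _ ≤ x ^ m := pow_le_pow_of_le_one hx.1.le hx.2 hmn.le
  · have hi : IntegrableOn (fun x : ℝ => x ^ (-(m : ℝ))) (Set.Ioi 1) :=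
      integrableOn_Ioi_rpow_of_lt (by
        have : (2 : ℝ) ≤ m := by exact_mod_cast hm
        linarith) one_pos
    refine Integrable.mono' hi hmeas.aestronglyMeasurable ?_
    refine (ae_restrict_iff' measurableSet_Ioi).mpr (ae_of_all _ fun x hx => ?_)
    have hx0 : (0 : ℝ) < x := lt_trans one_pos hx
    rw [norm_div, norm_pow, norm_pow, Real.norm_eq_abs, Real.norm_eq_abs, abs_of_pos hx0,
      Real.rpow_neg hx0.le, Real.rpow_natCast, div_eq_mul_inv]
    have := pow_le_one₀ (n := n) (abs_nonneg _) (Real.abs_sin_le_one x)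
    have h2 : 0 ≤ (x ^ m)⁻¹ := by positivity
    nlinarith

lemma aux_moment (n q : ℕ) (hq : q < n) :
    ∑ l ∈ Finset.range (n + 1), (-1 : ℝ) ^ l * (n.choose l : ℝ) * ((n : ℝ) - 2 * l) ^ q = 0 := by
  have h := Polynomial.fwdDiff_iter_eq_zero_of_degree_lt (R := ℝ)
    (P := (Polynomial.C (n : ℝ) - Polynomial.C 2 * Polynomial.X) ^ q) (n := n) (by
      refine lt_of_le_of_lt ?_ hq
      compute_degree)
  have h0 := congrFun h 0
  rw [fwdDiff_iter_eq_sum_shift] at h0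
  have h1 := congrArg (fun z => (-1 : ℝ) ^ n * z) h0
  simp only [Pi.zero_apply, mul_zero] at h1
  rw [← h1, Finset.mul_sum]
  refine Finset.sum_congr rfl fun l hl => ?_
  have hl' : l ≤ n := Nat.lt_succ_iff.mp (Finset.mem_range.mp hl)
  obtain ⟨p, rfl⟩ := Nat.exists_eq_add_of_le hl'
  have e : (-1 : ℝ) ^ (l + p) * (-1) ^ p = (-1) ^ l := by
    rw [pow_add, mul_assoc, ← mul_pow]; norm_num
  simp only [Nat.add_sub_cancel_left, zsmul_eq_mul, Polynomial.eval_pow, Polynomial.eval_sub,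
    Polynomial.eval_mul, Polynomial.eval_C, Polynomial.eval_X, nsmul_eq_mul, zero_add, mul_one]
  rw [← e]
  push_cast
  ring

lemma aux_sin_pow (n : ℕ) (x : ℝ) :
    ((Real.sin x ^ n : ℝ) : ℂ) = (-Complex.I / 2) ^ n * ∑ l ∈ Finset.range (n + 1),
      (-1 : ℂ) ^ l * (n.choose l : ℂ) *
        Complex.exp (Complex.I * (((n : ℝ) - 2 * l : ℝ) : ℂ) * x) := by
  push_cast
  have h : Complex.sin x = (-Complex.I / 2) *
      (-Complex.exp (-x * Complex.I) + Complex.exp (x * Complex.I)) := by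
    rw [Complex.sin]; ring
  rw [h, mul_pow, add_pow]
  congr 1
  refine Finset.sum_congr rfl fun l hl => ?_
  have hl' : l ≤ n := Nat.lt_succ_iff.mp (Finset.mem_range.mp hl)
  obtain ⟨p, rfl⟩ := Nat.exists_eq_add_of_le hl'
  rw [neg_pow, ← Complex.exp_nat_mul, ← Complex.exp_nat_mul, Nat.add_sub_cancel_left]
  rw [mul_assoc ((-1 : ℂ) ^ l), ← Complex.exp_add]
  rw [show (l : ℂ) * (-x * Complex.I) + p * (x * Complex.I) =
    Complex.I * (((l + p : ℕ) : ℂ) - 2 * l) * x by push_cast; ring]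
  ring

lemma aux_laplace (n : ℕ) {t : ℝ} (ht : 0 < t) :
    ((∫ x in Set.Ioi (0 : ℝ), Real.sin x ^ n * Real.exp (-(x * t)) : ℝ) : ℂ) =
    (-Complex.I / 2) ^ n * ∑ l ∈ Finset.range (n + 1), (-1 : ℂ) ^ l * (n.choose l : ℂ) *
      (1 / ((t : ℂ) - Complex.I * (((n : ℝ) - 2 * l : ℝ) : ℂ))) := by
  rw [← integral_complex_ofReal]
  have hre : ∀ l : ℕ,
      (-((t : ℂ) - Complex.I * (((n : ℝ) - 2 * l : ℝ) : ℂ))).re < 0 := by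
    intro l
    simp only [Complex.neg_re, Complex.sub_re, Complex.ofReal_re, Complex.mul_re, Complex.I_re,
      Complex.I_im, Complex.ofReal_im]
    linarith
  have he : ∀ x : ℝ, ((Real.sin x ^ n * Real.exp (-(x * t)) : ℝ) : ℂ) =
      (-Complex.I / 2) ^ n * ∑ l ∈ Finset.range (n + 1), (-1 : ℂ) ^ l * (n.choose l : ℂ) *
      Complex.exp (-((t : ℂ) - Complex.I * (((n : ℝ) - 2 * l : ℝ) : ℂ)) * x) := by
    intro x
    rw [Complex.ofReal_mul, aux_sin_pow, mul_assoc, Finset.sum_mul]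
    congr 1
    refine Finset.sum_congr rfl fun l _ => ?_
    rw [Complex.ofReal_exp, mul_assoc, ← Complex.exp_add]
    congr 2
    push_cast
    ring
  simp_rw [he]
  rw [integral_const_mul, integral_finsetSum]
  · congr 1
    refine Finset.sum_congr rfl fun l _ => ?_
    rw [integral_const_mul, integral_exp_mul_complex_Ioi (hre l)]
    congr 1
    simp only [Complex.ofReal_zero, mul_zero, Complex.exp_zero]
    rw [neg_div_neg_eq]
  · intro l _
    exact (integrableOn_exp_mul_complex_Ioi (hre l) 0).const_mul _

lemma aux_geom (k : ℕ) (t b : ℂ) (h : t - b ≠ 0) :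
    t ^ k * (1 / (t - b)) = b ^ k * (1 / (t - b)) +
      ∑ i ∈ Finset.range k, t ^ i * b ^ (k - 1 - i) := by
  have := (Commute.all t b).geom_sum₂_mul k
  field_simp
  rw [mul_comm (t - b), this]
  ring

lemma aux_rational (k j : ℕ) {t : ℝ} (ht : 0 < t) :
    t ^ k * ∫ x in Set.Ioi (0 : ℝ), Real.sin x ^ (k + 2 * j + 2) * Real.exp (-(x * t)) =
    (-1) ^ (j + 1) / 2 ^ (k + 2 * j + 2) * ∑ l ∈ Finset.range (k + 2 * j + 2 + 1),
      (-1 : ℝ) ^ l * ((k + 2 * j + 2).choose l : ℝ) *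
        (((k + 2 * j + 2 : ℕ) : ℝ) - 2 * l) ^ k *
        (t / (t ^ 2 + (((k + 2 * j + 2 : ℕ) : ℝ) - 2 * l) ^ 2)) := by
  set n := k + 2 * j + 2 with hn
  have hne : ∀ a : ℝ, (t : ℂ) - Complex.I * a ≠ 0 := by
    intro a h0
    have := congrArg Complex.re h0
    simp at this
    exact ht.ne' this
  have hc : (((t ^ k * ∫ x in Set.Ioi (0 : ℝ), Real.sin x ^ n * Real.exp (-(x * t)) : ℝ)) : ℂ) =
      (((-1) ^ (j + 1) / 2 ^ n : ℝ) : ℂ) * ∑ l ∈ Finset.range (n + 1),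
        (((-1 : ℝ) ^ l * (n.choose l : ℝ) * ((n : ℝ) - 2 * l) ^ k : ℝ) : ℂ) *
        (1 / ((t : ℂ) - Complex.I * (((n : ℝ) - 2 * l : ℝ) : ℂ))) := by
    rw [Complex.ofReal_mul, aux_laplace n ht, Complex.ofReal_pow, mul_left_comm, Finset.mul_sum]
    have e1 : ∀ l : ℕ, (t : ℂ) ^ k * ((-1 : ℂ) ^ l * (n.choose l : ℂ) *
        (1 / ((t : ℂ) - Complex.I * (((n : ℝ) - 2 * l : ℝ) : ℂ)))) =
        Complex.I ^ k * ((((-1 : ℝ) ^ l * (n.choose l : ℝ) * ((n : ℝ) - 2 * l) ^ k : ℝ) : ℂ) *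
        (1 / ((t : ℂ) - Complex.I * (((n : ℝ) - 2 * l : ℝ) : ℂ)))) +
        ∑ i ∈ Finset.range k, (t : ℂ) ^ i * Complex.I ^ (k - 1 - i) *
          (((-1 : ℝ) ^ l * (n.choose l : ℝ) * ((n : ℝ) - 2 * l) ^ (k - 1 - i) : ℝ) : ℂ) := by
      intro l
      rw [mul_left_comm, aux_geom k _ _ (hne _), mul_add, Finset.mul_sum]
      congr 1
      · rw [mul_pow]; push_cast; ring
      · refine Finset.sum_congr rfl fun i _ => ?_
        rw [mul_pow]; push_cast; ring
    rw [Finset.sum_congr rfl (fun l _ => e1 l), Finset.sum_add_distrib, Finset.sum_comm]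
    have e2 : ∑ i ∈ Finset.range k, ∑ l ∈ Finset.range (n + 1),
        (t : ℂ) ^ i * Complex.I ^ (k - 1 - i) *
          (((-1 : ℝ) ^ l * (n.choose l : ℝ) * ((n : ℝ) - 2 * l) ^ (k - 1 - i) : ℝ) : ℂ) = 0 := by
      refine Finset.sum_eq_zero fun i _ => ?_
      rw [← Finset.mul_sum, ← Complex.ofReal_sum, aux_moment n (k - 1 - i) (by omega)]
      simp
    rw [e2, add_zero, ← Finset.mul_sum, ← mul_assoc]
    congr 1
    rw [div_pow, hn]
    push_cast
    rw [div_mul_eq_mul_div]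
    congr 1
    rw [show k + 2 * j + 2 = k + 2 * (j + 1) by ring, pow_add, pow_mul, mul_right_comm, ← mul_pow]
    simp
  have hr := congrArg Complex.re hc
  rw [Complex.ofReal_re, Complex.re_ofReal_mul, Complex.re_sum] at hr
  rw [hr]
  congr 1
  refine Finset.sum_congr rfl fun l _ => ?_
  rw [Complex.re_ofReal_mul]
  congr 1
  rw [one_div, Complex.inv_re]
  simp [Complex.normSq_apply]
  ring

lemma aux_log_integral (s : Finset ℕ) (e a : ℕ → ℝ) (ha : ∀ l ∈ s, a l ≠ 0)
    (he : ∑ l ∈ s, e l = 0)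
    (hint : IntegrableOn (fun t : ℝ => ∑ l ∈ s, e l * (t / (t ^ 2 + a l ^ 2))) (Set.Ioi 0)) :
    ∫ t in Set.Ioi (0 : ℝ), ∑ l ∈ s, e l * (t / (t ^ 2 + a l ^ 2)) =
      -∑ l ∈ s, e l * Real.log |a l| := by
  have hd : ∀ t : ℝ, HasDerivAt (fun t : ℝ => ∑ l ∈ s, e l * (Real.log (t ^ 2 + a l ^ 2) / 2))
      (∑ l ∈ s, e l * (t / (t ^ 2 + a l ^ 2))) t := by
    intro t
    refine HasDerivAt.fun_sum fun l hl => ?_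
    have hpos : t ^ 2 + a l ^ 2 ≠ 0 := by
      have := ha l hl
      positivity
    have h1 : HasDerivAt (fun t : ℝ => t ^ 2 + a l ^ 2) (2 * t) t := by
      simpa using (hasDerivAt_pow 2 t).add_const (a l ^ 2)
    have h2 := ((h1.log hpos).div_const 2).const_mul (e l)
    have e1 : e l * (t / (t ^ 2 + a l ^ 2)) = e l * (2 * t / (t ^ 2 + a l ^ 2) / 2) := by ring
    rw [e1]
    exact h2
  have hlim : Filter.Tendsto (fun t : ℝ => ∑ l ∈ s, e l * (Real.log (t ^ 2 + a l ^ 2) / 2))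
      Filter.atTop (nhds 0) := by
    have hterm : ∀ l ∈ s, Filter.Tendsto
        (fun t : ℝ => e l * (Real.log (1 + a l ^ 2 * (t ^ 2)⁻¹) / 2)) Filter.atTop (nhds 0) := by
      intro l _
      have h1 : Filter.Tendsto (fun t : ℝ => (t ^ 2)⁻¹) Filter.atTop (nhds 0) :=
        (Filter.tendsto_pow_atTop two_ne_zero).inv_tendsto_atTop
      have h2 : Filter.Tendsto (fun t : ℝ => 1 + a l ^ 2 * (t ^ 2)⁻¹) Filter.atTop (nhds 1) := by
        simpa using (h1.const_mul (a l ^ 2)).const_add 1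
      have h3 := ((h2.log one_ne_zero).div_const 2).const_mul (e l)
      simpa using h3
    have hs := tendsto_finsetSum s hterm
    rw [Finset.sum_const_zero] at hs
    refine hs.congr' ?_
    filter_upwards [Filter.eventually_gt_atTop 0] with t ht
    have : ∀ l ∈ s, e l * (Real.log (t ^ 2 + a l ^ 2) / 2) =
        e l * (Real.log (1 + a l ^ 2 * (t ^ 2)⁻¹) / 2) + e l * (Real.log (t ^ 2) / 2) := by
      intro l _
      have h4 : t ^ 2 + a l ^ 2 = (1 + a l ^ 2 * (t ^ 2)⁻¹) * t ^ 2 := by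
        field_simp
      rw [h4, Real.log_mul (by positivity) (by positivity)]
      ring
    rw [Finset.sum_congr rfl this, Finset.sum_add_distrib, ← Finset.sum_mul, he]
    ring
  rw [integral_Ioi_of_hasDerivAt_of_tendsto (hd 0).continuousAt.continuousWithinAt
    (fun t _ => hd t) hint hlim, zero_sub]
  congr 1
  refine Finset.sum_congr rfl fun l _ => ?_
  congr 1
  rw [← sq_abs (a l)]
  simp

theorem stmt_3 (n m : ℕ) (hm : 2 ≤ m) (hmn : m < n) (hpar : Odd (n - m)) :
    ∫ x in Set.Ioi (0 : ℝ), Real.sin x ^ n / x ^ m =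
      (-1 : ℝ) ^ (((m : ℤ) - n + 1) / 2) / (2 ^ n * (Nat.factorial (m - 1))) *
        ∑ l ∈ (Finset.range (n + 1)).filter (fun l => 2 * l ≠ n),
          (-1 : ℝ) ^ l * (n.choose l : ℝ) * ((n : ℝ) - 2 * l) ^ (m - 1) *
            Real.log |2 * (l : ℝ) - n| := by
  obtain ⟨j, hj⟩ := hpar
  obtain ⟨k, rfl⟩ : ∃ k, m = k + 1 := ⟨m - 1, by omega⟩
  have hk : k ≠ 0 := by omega
  have hn : n = k + 2 * j + 2 := by omega
  have hexp : (-1 : ℝ) ^ ((((k + 1 : ℕ) : ℤ) - n + 1) / 2) = (-1) ^ j := by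
    have : ((((k + 1 : ℕ) : ℤ) - n + 1) / 2) = -(j : ℤ) := by omega
    rw [this, zpow_neg, zpow_natCast, ← inv_pow]
    norm_num
  rw [hexp, Nat.add_sub_cancel]
  -- Fubini
  have hI := aux_integrable n (k + 1) hm hmn
  have hprod : Integrable (Function.uncurry
      fun x t : ℝ => Real.sin x ^ n * (t ^ k * Real.exp (-(x * t))))
      ((volume.restrict (Set.Ioi 0)).prod (volume.restrict (Set.Ioi 0))) := by
    rw [integrable_prod_iff]
    · constructor
      · refine (ae_restrict_iff' measurableSet_Ioi).mpr (ae_of_all _ fun x hx => ?_)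
        exact Integrable.const_mul (f := fun t : ℝ => t ^ k * Real.exp (-(x * t)))
          (aux_gamma_integrable k hx) (Real.sin x ^ n)
      · refine (hI.norm.const_mul (k.factorial : ℝ)).congr ?_
        refine (ae_restrict_iff' measurableSet_Ioi).mpr (ae_of_all _ fun x hx => ?_)
        have hx0 : (0 : ℝ) < x := hx
        have : ∫ t in Set.Ioi (0 : ℝ), ‖Real.sin x ^ n * (t ^ k * Real.exp (-(x * t)))‖ =
            ∫ t in Set.Ioi (0 : ℝ), ‖Real.sin x ^ n‖ * (t ^ k * Real.exp (-(x * t))) := by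
          refine setIntegral_congr_fun measurableSet_Ioi fun t ht => ?_
          have ht0 : (0 : ℝ) < t := ht
          simp only [norm_mul]
          rw [Real.norm_of_nonneg (by positivity : 0 ≤ t ^ k),
            Real.norm_of_nonneg (Real.exp_nonneg _)]
        simp only [Function.uncurry_apply_pair]
        rw [this, integral_const_mul, aux_gamma_int k hx0, norm_div,
          Real.norm_of_nonneg (by positivity : 0 ≤ x ^ (k + 1))]
        ring
    · apply Continuous.aestronglyMeasurable
      unfold Function.uncurry
      fun_prop
  have hswap := integral_integral_swap hprod
  have hleft : ∫ x in Set.Ioi (0 : ℝ), ∫ t in Set.Ioi (0 : ℝ),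
      Real.sin x ^ n * (t ^ k * Real.exp (-(x * t))) =
      k.factorial * ∫ x in Set.Ioi (0 : ℝ), Real.sin x ^ n / x ^ (k + 1) := by
    rw [← integral_const_mul]
    refine setIntegral_congr_fun measurableSet_Ioi fun x hx => ?_
    rw [integral_const_mul, aux_gamma_int k hx]
    ring
  have hinner : ∀ t ∈ Set.Ioi (0 : ℝ), ∫ x in Set.Ioi (0 : ℝ),
      Real.sin x ^ n * (t ^ k * Real.exp (-(x * t))) =
      ∑ l ∈ (Finset.range (n + 1)).filter (fun l => 2 * l ≠ n),
        ((-1) ^ (j + 1) / 2 ^ n * ((-1 : ℝ) ^ l * (n.choose l : ℝ) * ((n : ℝ) - 2 * l) ^ k)) *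
        (t / (t ^ 2 + ((n : ℝ) - 2 * l) ^ 2)) := by
    intro t ht
    have h := aux_rational k j ht
    rw [← hn] at h
    rw [← integral_const_mul] at h
    simp_rw [mul_left_comm (Real.sin _ ^ n)]
    rw [h, Finset.mul_sum, Finset.sum_filter]
    refine Finset.sum_congr rfl fun l _ => ?_
    split_ifs with hl
    · ring
    · have : (n : ℝ) - 2 * l = 0 := by
        rw [not_not] at hl
        rw [← hl]; push_cast; ring
      rw [this, zero_pow hk]; ring
  have hsum0 : ∑ l ∈ (Finset.range (n + 1)).filter (fun l => 2 * l ≠ n),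
        ((-1) ^ (j + 1) / 2 ^ n *
          ((-1 : ℝ) ^ l * (n.choose l : ℝ) * ((n : ℝ) - 2 * l) ^ k)) = 0 := by
    have h := aux_moment n k (by omega)
    rw [← Finset.mul_sum, Finset.sum_filter]
    refine mul_eq_zero_of_right _ (Eq.trans ?_ h)
    refine Finset.sum_congr rfl fun l _ => ?_
    split_ifs with hl
    · rfl
    · have : (n : ℝ) - 2 * l = 0 := by
        rw [not_not] at hl
        rw [← hl]; push_cast; ring
      rw [this, zero_pow hk]; ring
  have hint := (hprod.integral_prod_right).congr
    ((ae_restrict_iff' measurableSet_Ioi).mpr (ae_of_all _ hinner))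
  have hfin := aux_log_integral ((Finset.range (n + 1)).filter (fun l => 2 * l ≠ n))
    (fun l => (-1) ^ (j + 1) / 2 ^ n *
          ((-1 : ℝ) ^ l * (n.choose l : ℝ) * ((n : ℝ) - 2 * l) ^ k))
    (fun l => (n : ℝ) - 2 * l) (by
      intro l hl h0
      refine (Finset.mem_filter.mp hl).2 ?_
      have : (2 * l : ℝ) = n := by linarith
      exact_mod_cast this) hsum0 hint
  rw [hleft, setIntegral_congr_fun measurableSet_Ioi hinner, hfin] at hswap
  have hf : (k.factorial : ℝ) ≠ 0 := by positivity
  rw [eq_comm, ← mul_right_inj' hf, hswap, ← Finset.sum_neg_distrib, Finset.mul_sum,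
    Finset.mul_sum]
  refine Finset.sum_congr rfl fun l _ => ?_
  rw [abs_sub_comm, pow_succ]
  field_simp
end

section
/- The function x ↦ sin⁴(x)/x³ is Lebesgue integrable on (0,∞) and ∫_0^∞ sin⁴(x)/x³ dx = ln 2. -/
open MeasureTheory Real

theorem aux_int : IntegrableOn (fun x : ℝ => Real.sin x ^ 4 / x ^ 3) (Set.Ioi 0) := by
  have h : IntegrableOn (fun x : ℝ => 2 * (1 + x ^ 2)⁻¹) (Set.Ioi 0) :=
    (integrable_inv_one_add_sq.const_mul 2).integrableOn
  refine Integrable.mono' h (Measurable.aestronglyMeasurable (by fun_prop)) ?_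
  refine (ae_restrict_iff' measurableSet_Ioi).2 (Filter.Eventually.of_forall fun x hx => ?_)
  have hx : 0 < x := hx
  have h4 : 0 ≤ Real.sin x ^ 4 := by positivity
  rw [Real.norm_of_nonneg (by positivity), ← div_eq_mul_inv, div_le_div_iff₀ (by positivity) (by positivity)]
  rcases le_total x 1 with h1 | h1
  · have : Real.sin x ^ 4 ≤ x ^ 4 := by
      have h := pow_le_pow_left₀ (abs_nonneg _) (Real.abs_sin_le_abs (x := x)) 4
      simpa [Even.pow_abs (show Even 4 by decide)] using h
    have h5 : x ^ 4 ≤ x ^ 3 := pow_le_pow_of_le_one hx.le h1 (by norm_num)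
    have h6 : x ^ 2 ≤ 1 := by nlinarith
    calc Real.sin x ^ 4 * (1 + x ^ 2) ≤ x ^ 3 * 2 := by
          apply mul_le_mul (this.trans h5) (by linarith) (by positivity) (by positivity)
      _ = _ := by ring
  · have : Real.sin x ^ 4 ≤ 1 := by
      have h := pow_le_pow_left₀ (abs_nonneg _) (Real.abs_sin_le_one x) 4
      simpa [Even.pow_abs (show Even 4 by decide)] using h
    have h5 : x ^ 2 ≤ x ^ 3 := pow_le_pow_right₀ h1 (by norm_num)
    have h6 : 1 ≤ x ^ 2 := one_le_pow₀ h1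
    nlinarith

theorem aux_eq {x : ℝ} (hx : 0 < x) :
    x⁻¹ • (Real.sinc (1 * x) ^ 2 - Real.sinc (2 * x) ^ 2) = Real.sin x ^ 4 / x ^ 3 := by
  rw [one_mul, Real.sinc_of_ne_zero hx.ne', Real.sinc_of_ne_zero (by positivity), Real.sin_two_mul,
    smul_eq_mul]
  have := Real.cos_sq' x
  field_simp
  rw [this]
  ring

theorem stmt_16 :
    IntegrableOn (fun x : ℝ => Real.sin x ^ 4 / x ^ 3) (Set.Ioi 0) ∧
    ∫ x in Set.Ioi (0 : ℝ), Real.sin x ^ 4 / x ^ 3 = Real.log 2 := by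
  refine ⟨aux_int, ?_⟩
  have hc : Continuous fun x : ℝ => Real.sinc x ^ 2 := Real.continuous_sinc.pow 2
  have hL : Filter.Tendsto (fun x : ℝ => Real.sinc x ^ 2) (nhdsWithin 0 (Set.Ioi 0)) (nhds 1) := by
    have := hc.tendsto 0
    simp only [Real.sinc_zero, one_pow] at this
    exact this.mono_left nhdsWithin_le_nhds
  have hR : Filter.Tendsto (fun x : ℝ => Real.sinc x ^ 2) Filter.atTop (nhds 0) := by
    have h2 : Filter.Tendsto (fun x : ℝ => (x ^ 2)⁻¹) Filter.atTop (nhds 0) :=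
      (Filter.tendsto_pow_atTop (by norm_num)).inv_tendsto_atTop
    refine squeeze_zero' (Filter.Eventually.of_forall fun x => sq_nonneg _) ?_ h2
    filter_upwards [Filter.eventually_gt_atTop 0] with x hx
    rw [Real.sinc_of_ne_zero hx.ne', div_pow, ← one_div]
    gcongr
    exact Real.sin_sq_le_one x
  have key := Frullani.integral_Ioi_eq (hc.locallyIntegrable.locallyIntegrableOn _)
    one_pos two_pos hL hR
    (aux_int.congr_fun (fun x hx => (aux_eq hx).symm) measurableSet_Ioi)
  rw [setIntegral_congr_fun measurableSet_Ioi (fun x hx => aux_eq hx)] at key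
  simpa using key
end
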